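/- In the real Clifford algebra Clℝ(w) with n = 3 and w identically +1, for all vectors d, E, H : Fin 3 → ℝ, the product ι(d) · (ι(E) + ω · ι(H)) equals algebraMap (Σᵢ d i · E i) − ι(d ×₃ H) + ω · ι(d ×₃ E) + (Σᵢ d i · H i) • ω. (Equation (12) of the paper: with d the spatial gradient and E + ωH the complex electromagnetic field, the scalar part is div E, the vector part is −curl H (combining with ∂₀E to give one pair of Maxwell equations), the ω·ι part is curl E and the ω-scalar part is div H, giving the other pair.) -/

import Mathlib

open scoped Matrix

/-- The real Clifford algebra `R₃` (three generators squaring to `+1`). -/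
noncomputable abbrev CliffR3 :=
  CliffordAlgebra (QuadraticMap.weightedSumSquares ℝ (fun _ : Fin 3 => (1 : ℝ)))

/-- The canonical embedding of vectors into `R₃`. -/
noncomputable def ιR3 : (Fin 3 → ℝ) →ₗ[ℝ] CliffR3 :=
  CliffordAlgebra.ι (QuadraticMap.weightedSumSquares ℝ (fun _ : Fin 3 => (1 : ℝ)))

/-- The volume element `ω = e₁e₂e₃` of `R₃`. -/
noncomputable def ωR3 : CliffR3 :=
  ((List.finRange 3).map fun i => ιR3 (Pi.single i 1)).prod

/-!
Two vectors of Euclidean 3-space multiply in its Clifford algebra as `v u = v ⬝ u + ω (v × u)`.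
Since `ω` is central with `ω² = -1`, applying this formula to `d E` and to `d H` in
`d (E + ω H) = d E + ω (d H)` gives the four terms of the Maxwell operator.
-/

open CliffordAlgebra QuadraticMap

section Anticommuting

variable {α A : Type*} [Ring A] {e : α → A}

/-- A family of ring elements that anticommute at distinct indices, such as the generators of the
Clifford algebra of a diagonal form. The squares are arbitrary. -/
def Anticommuting (e : α → A) : Prop :=
  Pairwise fun i j ↦ e i * e j = -(e j * e i)

namespace Anticommuting

lemma mul_prod_map_of_notMem (he : Anticommuting e) {i : α} {l : List α} (hi : i ∉ l) :
    e i * (l.map e).prod = (-1 : ℤ) ^ l.length • ((l.map e).prod * e i) := by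
  induction l with
  | nil => simp
  | cons j l ih =>
    obtain ⟨hij, hil⟩ := List.ne_and_not_mem_of_not_mem_cons hi
    rw [List.map_cons, List.prod_cons, ← mul_assoc, he hij, neg_mul, mul_assoc, ih hil,
      mul_smul_comm, List.length_cons, pow_succ, mul_neg_one, neg_smul, mul_assoc]

lemma mul_prod_map_of_mem (he : Anticommuting e) {i : α} {l : List α} (hl : l.Nodup)
    (hi : i ∈ l) :
    e i * (l.map e).prod = (-1 : ℤ) ^ (l.length + 1) • ((l.map e).prod * e i) := by
  induction l with
  | nil => simp at hi
  | cons j l ih =>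
    obtain ⟨hjl, hl⟩ := List.nodup_cons.mp hl
    rw [List.map_cons, List.prod_cons, List.length_cons]
    rcases eq_or_ne i j with rfl | hij
    · nth_rw 1 [he.mul_prod_map_of_notMem hjl]
      rw [mul_smul_comm, mul_assoc, pow_add _ _ 2, neg_one_sq, mul_one]
    · have hil : i ∈ l := List.mem_of_ne_of_mem hij hi
      rw [← mul_assoc, he hij, neg_mul, mul_assoc, ih hl hil, mul_smul_comm,
        pow_succ _ (l.length + 1), mul_neg_one, neg_smul, mul_assoc]

lemma prod_map_mul_self {R : Type*} [CommSemiring R] [Algebra R A] {w : α → R}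
    (he : Anticommuting e) (hw : ∀ i, e i * e i = algebraMap R A (w i))
    {l : List α} (hl : l.Nodup) :
    (l.map e).prod * (l.map e).prod =
      (-1 : ℤ) ^ l.length.choose 2 • algebraMap R A (l.map w).prod := by
  induction l with
  | nil => simp
  | cons i l ih =>
    obtain ⟨hil, hl⟩ := List.nodup_cons.mp hl
    set P := (l.map e).prod
    calc ((i :: l).map e).prod * ((i :: l).map e).prod
        = (e i * P) * (e i * P) := by rw [List.map_cons, List.prod_cons]
      _ = (-1 : ℤ) ^ l.length • (P * (e i * e i) * P) := by
        nth_rw 1 [he.mul_prod_map_of_notMem hil]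
        simp only [smul_mul_assoc, mul_assoc, P]
      _ = (-1 : ℤ) ^ l.length • (algebraMap R A (w i) * (P * P)) := by
        rw [hw, ← Algebra.commutes, mul_assoc]
      _ = (-1 : ℤ) ^ (i :: l).length.choose 2 • algebraMap R A ((i :: l).map w).prod := by
        rw [ih hl, mul_smul_comm, smul_smul, ← pow_add, ← map_mul, List.map_cons, List.prod_cons,
          List.length_cons, Nat.choose_succ_succ' l.length 1, Nat.choose_one_right]

end Anticommuting

end Anticommuting

section Generators

variable {R κ : Type*} [CommRing R] [Fintype κ] (w : κ → R)

lemma isOrtho_weightedSumSquares_of_mul_eq_zero {v u : κ → R} (h : ∀ i, v i * u i = 0) :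
    (weightedSumSquares R w).IsOrtho v u := by
  rw [isOrtho_def]
  simp only [weightedSumSquares_apply, smul_eq_mul, Pi.add_apply, ← Finset.sum_add_distrib]
  refine Finset.sum_congr rfl fun i _ ↦ ?_
  linear_combination 2 * w i * h i

variable [DecidableEq κ]

/-- The generator `eᵢ` of the Clifford algebra of the diagonal form `∑ i, w i * x i ^ 2`. -/
def generator (i : κ) : CliffordAlgebra (weightedSumSquares R w) :=
  ι (weightedSumSquares R w) (Pi.single i 1)

lemma ι_eq_sum_smul_generator (v : κ → R) :
    ι (weightedSumSquares R w) v = ∑ i, v i • generator w i := by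
  conv_lhs => rw [pi_eq_sum_univ' v]
  simp [generator]

lemma generator_mul_self (i : κ) :
    generator w i * generator w i = algebraMap R _ (w i) := by
  simp [generator, ι_sq_scalar, Pi.single_apply]

lemma anticommuting_generator : Anticommuting (generator w) :=
  fun i j hij ↦ ι_mul_ι_comm_of_isOrtho <| isOrtho_weightedSumSquares_of_mul_eq_zero w fun k ↦ by
    rcases eq_or_ne k i with rfl | hki
    · rw [Pi.single_eq_of_ne hij, mul_zero]
    · rw [Pi.single_eq_of_ne hki, zero_mul]

end Generators

section VolumeElement

variable {R : Type*} [CommRing R] {n : ℕ} (w : Fin n → R)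

/-- The volume element `ω = e₁ ⋯ eₙ`, the ordered product of all the generators. -/
def volumeElement : CliffordAlgebra (weightedSumSquares R w) :=
  ((List.finRange n).map (generator w)).prod

lemma commute_volumeElement_ι (hn : Odd n) (v : Fin n → R) :
    Commute (volumeElement w) (ι (weightedSumSquares R w) v) := by
  have commute_generator (i : Fin n) : Commute (volumeElement w) (generator w i) := by
    have h := (anticommuting_generator w).mul_prod_map_of_mem
      (List.nodup_finRange n) (List.mem_finRange i)
    rw [List.length_finRange, hn.add_one.neg_one_pow, one_smul] at h
    exact h.symm
  rw [ι_eq_sum_smul_generator]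
  exact Commute.sum_right _ _ _ fun i _ ↦ (commute_generator i).smul_right (v i)

lemma volumeElement_mul_self :
    volumeElement w * volumeElement w =
      (-1 : ℤ) ^ n.choose 2 • algebraMap R _ (∏ i, w i) := by
  rw [volumeElement, (anticommuting_generator w).prod_map_mul_self (generator_mul_self w)
    (List.nodup_finRange n), List.length_finRange, Fin.prod_univ_def]

end VolumeElement

section ThreeDimensional

variable {R : Type*} [CommRing R]

lemma volumeElement_eq_generator_mul_mul (w : Fin 3 → R) (i : Fin 3) :
    volumeElement w = generator w i * generator w (i + 1) * generator w (i + 2) := by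
  have rotate (j k l : Fin 3) (hjk : j ≠ k) (hjl : j ≠ l) :
      generator w j * generator w k * generator w l =
        generator w k * generator w l * generator w j := by
    rw [anticommuting_generator w hjk, neg_mul, mul_assoc,
      anticommuting_generator w hjl, mul_neg, neg_neg, mul_assoc]
  have volumeElement_eq : volumeElement w = generator w 0 * generator w 1 * generator w 2 := by
    simp [volumeElement, List.finRange_succ, mul_assoc]
  fin_cases i
  · exact volumeElement_eq
  · exact volumeElement_eq.trans (rotate 0 1 2 (by decide) (by decide))
  · exact volumeElement_eq.trans (rotate 2 0 1 (by decide) (by decide)).symm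

lemma volumeElement_mul_generator_add_two (w : Fin 3 → R) (i : Fin 3) :
    volumeElement w * generator w (i + 2) =
      w (i + 2) • (generator w i * generator w (i + 1)) := by
  rw [volumeElement_eq_generator_mul_mul w i, mul_assoc, generator_mul_self, ← Algebra.commutes,
    Algebra.smul_def]

lemma ι_mul_ι_eq_dotProduct_add_cross (v u : Fin 3 → R) :
    ι (weightedSumSquares R (1 : Fin 3 → R)) v * ι (weightedSumSquares R 1) u =
      algebraMap R _ (v ⬝ᵥ u) + volumeElement 1 * ι (weightedSumSquares R 1) (v ⨯₃ u) := by
  set e := generator (1 : Fin 3 → R)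
  set ω := volumeElement (1 : Fin 3 → R)
  have sq (i : Fin 3) : e i * e i = 1 := by simp [e, generator_mul_self]
  have anticomm {i j : Fin 3} (hij : i ≠ j) : e i * e j = -(e j * e i) :=
    anticommuting_generator 1 hij
  have dual (i : Fin 3) : ω * e (i + 2) = e i * e (i + 1) := by
    simp [e, ω, volumeElement_mul_generator_add_two]
  have dual₀ : ω * e 0 = e 1 * e 2 := dual 1
  have dual₁ : ω * e 1 = e 2 * e 0 := dual 2
  have dual₂ : ω * e 2 = e 0 * e 1 := dual 0
  have swap₁₀ : e 1 * e 0 = -(e 0 * e 1) := anticomm (by decide)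
  have swap₂₁ : e 2 * e 1 = -(e 1 * e 2) := anticomm (by decide)
  have swap₀₂ : e 0 * e 2 = -(e 2 * e 0) := anticomm (by decide)
  have expand (x : Fin 3 → R) :
      ι (weightedSumSquares R 1) x = x 0 • e 0 + x 1 • e 1 + x 2 • e 2 := by
    rw [ι_eq_sum_smul_generator, Fin.sum_univ_three]
  simp only [expand, cross_apply, Matrix.cons_val, dotProduct, Fin.sum_univ_three,
    Algebra.algebraMap_eq_smul_one, mul_add, add_mul, smul_mul_assoc, mul_smul_comm,
    sq, dual₀, dual₁, dual₂, swap₁₀, swap₂₁, swap₀₂]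
  module

lemma volumeElement_one_mul_self :
    volumeElement (1 : Fin 3 → R) * volumeElement 1 = -1 := by
  simp [volumeElement_mul_self, Nat.choose]

theorem gradient_mul_field_general (d E H : Fin 3 → R) :
    ι (weightedSumSquares R (1 : Fin 3 → R)) d *
        (ι (weightedSumSquares R 1) E + volumeElement 1 * ι (weightedSumSquares R 1) H) =
      algebraMap R _ (∑ i, d i * E i) - ι (weightedSumSquares R 1) (d ⨯₃ H) +
        volumeElement 1 * ι (weightedSumSquares R 1) (d ⨯₃ E) +
        (∑ i, d i * H i) • volumeElement 1 := by
  set ω := volumeElement (1 : Fin 3 → R)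
  set f := ι (weightedSumSquares R (1 : Fin 3 → R))
  calc f d * (f E + ω * f H)
      = f d * f E + ω * (f d * f H) := by
        rw [mul_add, ← mul_assoc, ← (commute_volumeElement_ι 1 (by decide) d).eq, mul_assoc]
    _ = (algebraMap R _ (d ⬝ᵥ E) + ω * f (d ⨯₃ E)) +
          ω * (algebraMap R _ (d ⬝ᵥ H) + ω * f (d ⨯₃ H)) := by
        rw [ι_mul_ι_eq_dotProduct_add_cross, ι_mul_ι_eq_dotProduct_add_cross]
    _ = algebraMap R _ (d ⬝ᵥ E) - f (d ⨯₃ H) + ω * f (d ⨯₃ E) + (d ⬝ᵥ H) • ω := by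
        rw [mul_add, ← mul_assoc ω ω, volumeElement_one_mul_self, ← Algebra.commutes,
          ← Algebra.smul_def, neg_one_mul]
        abel

end ThreeDimensional

/-- Eq. (12): multiplying the gradient `d` by the complex electromagnetic field
`E + ωH` yields `div E − curl H + ω curl E + (div H) ω`, encoding the Maxwell
equations. -/
theorem gradient_mul_field (d E H : Fin 3 → ℝ) :
    ιR3 d * (ιR3 E + ωR3 * ιR3 H) =
      algebraMap ℝ CliffR3 (∑ i, d i * E i) - ιR3 (d ⨯₃ H) +
        ωR3 * ιR3 (d ⨯₃ E) + (∑ i, d i * H i) • ωR3 :=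
  gradient_mul_field_general d E H
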